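/- Let (L₁, L'₁, L₂) ∈ Z(k,l), let 0 ≤ s ≤ N−l, suppose dim_ℂ ker(z|_{L₂/L₀}) ≥ l+s, dim_ℂ((L₁ ∩ L'₁)/L₀) ≥ k−s and dim_ℂ ker(z|_{L₂/L₀}) + dim_ℂ((L₁ ∩ L'₁)/L₀) ≤ k+l+1, and let (W₁, W₂) be the unique pair of R-submodules with L₀ ⊆ W₁ ⊆ L₁ ∩ L'₁, L₁ + L'₁ ⊆ W₂ ⊆ L₂, dim_ℂ(W₁/L₀) = k−s, dim_ℂ(W₂/L₀) = l+s, z·L₂ ⊆ W₁ and z·W₂ ⊆ L₀. Then: (a) multiplication by z induces a ℂ-linear map z̄ : L₂/W₂ → W₁/L₀ and dim_ℂ ker(z|_{L₂/L₀}) = (l+s) + dim_ℂ ker(z̄); (b) the inclusion L₁ ⊆ W₂ induces a ℂ-linear map ι : L₁/W₁ → W₂/L'₁ whose kernel is (L₁ ∩ L'₁)/W₁, and dim_ℂ((L₁ ∩ L'₁)/L₀) = (k−s) + dim_ℂ ker(ι). In particular, dim_ℂ ker(z|_{L₂/L₀}) ≥ l+s+1 if and only if z̄ fails to be injective, and dim_ℂ((L₁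 ∩ L'₁)/L₀) ≥ k−s+1 if and only if ι fails to be injective. -/

import Mathlib

open Polynomial

set_option synthInstance.maxHeartbeats 1000000
set_option maxHeartbeats 1000000

noncomputable section

abbrev KM (m : ℕ) := Fin m → RatFunc ℂ

abbrev SubM (m : ℕ) := Submodule (Polynomial ℂ) (KM m)

def polyL0 (m : ℕ) : SubM m :=
  Submodule.pi Set.univ fun _ => LinearMap.range (Algebra.linearMap (Polynomial ℂ) (RatFunc ℂ))

abbrev QuotMod (m : ℕ) (A B : SubM m) := ↥B ⧸ (A.comap B.subtype)

def fdim (m : ℕ) (A B : SubM m) : ℕ := Module.finrank ℂ (QuotMod m A B)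

def zmul (m : ℕ) (w : ℂ) : KM m →ₗ[Polynomial ℂ] KM m :=
  (Polynomial.X - Polynomial.C w) • LinearMap.id

def quotSmul (m : ℕ) (p : Polynomial ℂ) (A B : SubM m) :
    QuotMod m A B →ₗ[ℂ] QuotMod m A B where
  toFun v := p • v
  map_add' x y := smul_add p x y
  map_smul' c x := smul_comm p c x

def IsYChain (m n : ℕ) (k : ℕ → ℕ) (w : ℕ → ℂ) (L : ℕ → SubM m) : Prop :=
  L 0 = polyL0 m ∧
  (∀ i < n, L i ≤ L (i + 1)) ∧
  (∀ i < n, FiniteDimensional ℂ (QuotMod m (L i) (L (i + 1)))) ∧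
  (∀ i < n, fdim m (L i) (L (i + 1)) = k (i + 1)) ∧
  (∀ i < n, ∀ x ∈ L (i + 1), zmul m (w (i + 1)) x ∈ L i)

/-- Multiplication by `z` as an `R`-linear endomorphism of `K^m`. -/
def zmul0 (m : ℕ) : KM m →ₗ[Polynomial ℂ] KM m :=
  (Polynomial.X : Polynomial ℂ) • LinearMap.id

/-- Membership in the two-strand correspondence `Z(k,l)`. -/
def InZkl (m k l : ℕ) (L₁ L₁' L₂ : SubM m) : Prop :=
  polyL0 m ≤ L₁ ∧ L₁ ≤ L₂ ∧ polyL0 m ≤ L₁' ∧ L₁' ≤ L₂ ∧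
  fdim m (polyL0 m) L₁ = k ∧ fdim m (polyL0 m) L₁' = l ∧
  fdim m (polyL0 m) L₂ = k + l ∧
  (∀ x ∈ L₁, zmul0 m x ∈ polyL0 m) ∧ (∀ x ∈ L₁', zmul0 m x ∈ polyL0 m) ∧
  (∀ x ∈ L₂, zmul0 m x ∈ L₁) ∧ (∀ x ∈ L₂, zmul0 m x ∈ L₁')

/-!
Multiplication by `z` on `L₂ / L₀`, the map `z̄` and the map `ι` are all maps of subquotients
`f : B / A → B' / A'` induced by a linear map `T` of the ambient modules (`ι` by the identity). The
kernel of such an `f` is `K / A` with `K = B ∩ T⁻¹ A'`. For `z̄` the quotient `K / L₀` is the kernel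
of `z` on `L₂ / L₀`, and for `ι` one has `K = L₁ ∩ L₁'`. Both dimension formulas are therefore
additivity of dimension along `L₀ ⊆ A ⊆ K`.
-/

section Semiring

variable {F R M N : Type*} [Semiring F] [Ring R] [SMul F R]
  [AddCommGroup M] [Module R M] [Module F M] [IsScalarTower F R M]
  [AddCommGroup N] [Module R N] [Module F N] [IsScalarTower F R N]

/-- The subquotient `B / (A ∩ B)` of a module, for submodules `A` and `B`; it is `B / A` when
`A ≤ B`. The shape of the definition makes `QuotMod m` its special case `M = KM m`. -/
abbrev Subquotient (A B : Submodule R M) := ↥B ⧸ A.comap B.subtype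

namespace Subquotient

variable {A B C : Submodule R M} {A' B' : Submodule R N} {T : M →ₗ[R] N}

/-- A map `f : B / A → B' / A'` is induced by `T : M → N` if `f [x] = [T x]` whenever `x ∈ B` and
`T x ∈ B'`. Nothing is required of `f [x]` when `T x ∉ B'`. -/
def IsInduced (T : M →ₗ[R] N) (f : Subquotient A B →ₗ[F] Subquotient A' B') : Prop :=
  ∀ (x : B) (y : B'), (y : N) = T x → f (Submodule.Quotient.mk x) = Submodule.Quotient.mk y

variable (F) in
/-- The map `B / A → B' / A'` induced by a linear map `T` with `T A ⊆ A'` and `T B ⊆ B'`. -/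
def map (T : M →ₗ[R] N) (hA : A ≤ A'.comap T) (hB : B ≤ B'.comap T) :
    Subquotient A B →ₗ[F] Subquotient A' B' :=
  (Submodule.mapQ _ _ (T.restrict hB) fun _ hx ↦ hA hx).restrictScalars F

theorem isInduced_map (hA : A ≤ A'.comap T) (hB : B ≤ B'.comap T) :
    IsInduced T (map F T hA hB) :=
  fun _ _ hxy ↦ congrArg Submodule.Quotient.mk (Subtype.ext hxy.symm)

theorem IsInduced.mk_mem_ker_iff {f : Subquotient A B →ₗ[F] Subquotient A' B'}
    (hf : IsInduced T f) (hB : B ≤ B'.comap T) (x : B) :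
    Submodule.Quotient.mk x ∈ LinearMap.ker f ↔ T x ∈ A' := by
  rw [LinearMap.mem_ker, hf x ⟨T x, hB x.2⟩ rfl, Submodule.Quotient.mk_eq_zero]
  rfl

theorem IsInduced.ker_eq {f : Subquotient A B →ₗ[F] Subquotient A' B'}
    (hf : IsInduced T f) (hB : B ≤ B'.comap T) :
    LinearMap.ker f = (((B ⊓ A'.comap T).comap B.subtype).map
      (A.comap B.subtype).mkQ).restrictScalars F := by
  ext q
  constructor
  · intro hq
    obtain ⟨x, rfl⟩ := Submodule.Quotient.mk_surjective _ q
    exact ⟨x, ⟨x.2, (hf.mk_mem_ker_iff hB x).1 hq⟩, rfl⟩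
  · rintro ⟨x, hx, rfl⟩
    exact (hf.mk_mem_ker_iff hB x).2 hx.2

variable (F) in
theorem map_id_injective (h : B ≤ C) :
    Function.Injective (map F LinearMap.id le_rfl h : Subquotient A B →ₗ[F] Subquotient A C) := by
  rw [injective_iff_map_eq_zero]
  intro q hq
  obtain ⟨x, rfl⟩ := Submodule.Quotient.mk_surjective _ q
  exact (Submodule.Quotient.mk_eq_zero _).2 (((isInduced_map _ h).mk_mem_ker_iff h x).1 hq)

variable (F) in
theorem map_id_surjective (h : A ≤ B) :
    Function.Surjective
      (map F LinearMap.id h le_rfl : Subquotient A C →ₗ[F] Subquotient B C) := by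
  intro q
  obtain ⟨x, rfl⟩ := Submodule.Quotient.mk_surjective _ q
  exact ⟨Submodule.Quotient.mk x, rfl⟩

theorem range_map_id (h : B ≤ C) :
    LinearMap.range (map F LinearMap.id le_rfl h : Subquotient A B →ₗ[F] Subquotient A C) =
      ((B.comap C.subtype).map (A.comap C.subtype).mkQ).restrictScalars F := by
  ext q
  constructor
  · rintro ⟨p, rfl⟩
    obtain ⟨x, rfl⟩ := Submodule.Quotient.mk_surjective _ p
    exact ⟨⟨x, h x.2⟩, x.2, rfl⟩
  · rintro ⟨x, hx, rfl⟩
    exact ⟨Submodule.Quotient.mk ⟨x, hx⟩, rfl⟩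

theorem IsInduced.finrank_ker {f : Subquotient A B →ₗ[F] Subquotient A' B'}
    (hf : IsInduced T f) (hB : B ≤ B'.comap T) :
    Module.finrank F (LinearMap.ker f) =
      Module.finrank F (Subquotient A (B ⊓ A'.comap T)) := by
  rw [hf.ker_eq hB, ← range_map_id inf_le_left,
    LinearMap.finrank_range_of_inj (map_id_injective F inf_le_left)]

variable (F) in
theorem finite_of_le_left [Module.Finite F (Subquotient A C)] (h : A ≤ B) :
    Module.Finite F (Subquotient B C) :=
  Module.Finite.of_surjective _ (map_id_surjective F h)

end Subquotient

end Semiring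

section DivisionRing

variable {F R M N : Type*} [DivisionRing F] [Ring R] [SMul F R]
  [AddCommGroup M] [Module R M] [Module F M] [IsScalarTower F R M]
  [AddCommGroup N] [Module R N] [Module F N] [IsScalarTower F R N]

namespace Subquotient

variable {A₀ A B C : Submodule R M} {A' B' : Submodule R N} {T : M →ₗ[R] N}

variable (F) in
theorem finite_of_le_right [Module.Finite F (Subquotient A C)] (h : B ≤ C) :
    Module.Finite F (Subquotient A B) :=
  Module.Finite.of_injective _ (map_id_injective F h)

theorem finrank_add_finrank [Module.Finite F (Subquotient A C)] (hAB : A ≤ B) (hBC : B ≤ C) :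
    Module.finrank F (Subquotient A B) + Module.finrank F (Subquotient B C) =
      Module.finrank F (Subquotient A C) := by
  let π : Subquotient A C →ₗ[F] Subquotient B C := map F LinearMap.id hAB le_rfl
  have hπ : IsInduced LinearMap.id π := isInduced_map hAB le_rfl
  have hker : Module.finrank F (LinearMap.ker π) = Module.finrank F (Subquotient A B) := by
    rw [hπ.finrank_ker le_rfl, Submodule.comap_id, inf_eq_right.2 hBC]
  have hrange : Module.finrank F (LinearMap.range π) = Module.finrank F (Subquotient B C) := by
    rw [LinearMap.range_eq_top.2 (map_id_surjective F hAB), finrank_top]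
  rw [← hker, ← hrange, add_comm, LinearMap.finrank_range_add_finrank_ker]

theorem IsInduced.finrank_inf_comap [Module.Finite F (Subquotient A₀ B)]
    {f : Subquotient A B →ₗ[F] Subquotient A' B'} (hf : IsInduced T f)
    (h₀ : A₀ ≤ A) (hAB : A ≤ B) (hA : A ≤ A'.comap T) (hB : B ≤ B'.comap T) :
    Module.finrank F (Subquotient A₀ (B ⊓ A'.comap T)) =
      Module.finrank F (Subquotient A₀ A) + Module.finrank F (LinearMap.ker f) := by
  have := finite_of_le_right F (A := A₀) (inf_le_left : B ⊓ A'.comap T ≤ B)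
  rw [hf.finrank_ker hB, finrank_add_finrank h₀ (le_inf hAB hA)]

theorem IsInduced.finrank_lt_finrank_inf_comap_iff [Module.Finite F (Subquotient A₀ B)]
    {f : Subquotient A B →ₗ[F] Subquotient A' B'} (hf : IsInduced T f)
    (h₀ : A₀ ≤ A) (hAB : A ≤ B) (hA : A ≤ A'.comap T) (hB : B ≤ B'.comap T) :
    Module.finrank F (Subquotient A₀ A) <
      Module.finrank F (Subquotient A₀ (B ⊓ A'.comap T)) ↔ ¬ Function.Injective f := by
  have := finite_of_le_left F (C := B) h₀
  rw [hf.finrank_inf_comap h₀ hAB hA hB, lt_add_iff_pos_right, ← LinearMap.ker_eq_bot]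
  exact Submodule.one_le_finrank_iff

end Subquotient

open Subquotient in
theorem statement12_general (T : Module.End R M) {L₀ L₁ L₁' L₂ W₁ W₂ : Submodule R M}
    [Module.Finite F (Subquotient L₀ L₂)]
    (h₀W₁ : L₀ ≤ W₁) (hW₁ : W₁ ≤ L₁ ⊓ L₁') (hL₁W₂ : L₁ ≤ W₂) (hW₂L₂ : W₂ ≤ L₂)
    (hTL₂ : L₂ ≤ W₁.comap T) (hTW₂ : W₂ ≤ L₀.comap T)
    {TL₂ : Subquotient L₀ L₂ →ₗ[F] Subquotient L₀ L₂} (hT : IsInduced T TL₂) :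
    ((∃ f : Subquotient W₂ L₂ →ₗ[F] Subquotient L₀ W₁, IsInduced T f) ∧
      ∀ f : Subquotient W₂ L₂ →ₗ[F] Subquotient L₀ W₁, IsInduced T f →
        Module.finrank F (LinearMap.ker TL₂) =
          Module.finrank F (Subquotient L₀ W₂) + Module.finrank F (LinearMap.ker f) ∧
        (Module.finrank F (Subquotient L₀ W₂) < Module.finrank F (LinearMap.ker TL₂) ↔
          ¬ Function.Injective f)) ∧
    ((∃ ι : Subquotient W₁ L₁ →ₗ[F] Subquotient L₁' W₂, IsInduced LinearMap.id ι) ∧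
      ∀ ι : Subquotient W₁ L₁ →ₗ[F] Subquotient L₁' W₂, IsInduced LinearMap.id ι →
        LinearMap.ker ι = (((L₁ ⊓ L₁').comap L₁.subtype).map
          (W₁.comap L₁.subtype).mkQ).restrictScalars F ∧
        Module.finrank F (Subquotient L₀ (L₁ ⊓ L₁')) =
          Module.finrank F (Subquotient L₀ W₁) + Module.finrank F (LinearMap.ker ι) ∧
        (Module.finrank F (Subquotient L₀ W₁) < Module.finrank F (Subquotient L₀ (L₁ ⊓ L₁')) ↔
          ¬ Function.Injective ι)) := by
  obtain ⟨hW₁L₁, hW₁L₁'⟩ := le_inf_iff.1 hW₁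
  have hL₁L₂ := hL₁W₂.trans hW₂L₂
  have h₀W₂ := (h₀W₁.trans hW₁L₁).trans hL₁W₂
  have := finite_of_le_right F (A := L₀) hL₁L₂
  rw [hT.finrank_ker (hTL₂.trans (Submodule.comap_mono (hW₁L₁.trans hL₁L₂)))]
  exact ⟨⟨⟨_, isInduced_map hTW₂ hTL₂⟩, fun f hf ↦
      ⟨hf.finrank_inf_comap h₀W₂ hW₂L₂ hTW₂ hTL₂,
        hf.finrank_lt_finrank_inf_comap_iff h₀W₂ hW₂L₂ hTW₂ hTL₂⟩⟩,
    ⟨_, isInduced_map hW₁L₁' hL₁W₂⟩, fun ι hι ↦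
      ⟨hι.ker_eq hL₁W₂, hι.finrank_inf_comap h₀W₁ hW₁L₁ hW₁L₁' hL₁W₂,
        hι.finrank_lt_finrank_inf_comap_iff h₀W₁ hW₁L₁ hW₁L₁' hL₁W₂⟩⟩

end DivisionRing

theorem isInduced_quotSmul_X (m : ℕ) (A B : SubM m) :
    Subquotient.IsInduced (zmul0 m) (quotSmul m X A B) :=
  fun _ _ hxy ↦ congrArg Submodule.Quotient.mk (Subtype.ext hxy.symm)

theorem InZkl.finiteDimensional_quotMod {m k l : ℕ} {L₁ L₁' L₂ : SubM m}
    (hZ : InZkl m k l L₁ L₁' L₂) (hpos : 0 < k + l) :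
    FiniteDimensional ℂ (QuotMod m (polyL0 m) L₂) := by
  obtain ⟨-, -, -, -, -, -, hL₂, -⟩ := hZ
  exact FiniteDimensional.of_finrank_pos (hpos.trans_eq hL₂.symm)

/-- description of the divisors `D_{s,+}` and `D_{s,-}` via the maps
`z̄ : L₂/W₂ → W₁/L₀` (induced by multiplication by `z`) and `ι : L₁/W₁ → W₂/L'₁`
(induced by the inclusion `L₁ ⊆ W₂`). -/
theorem statement12 (m : ℕ) (hm : 2 ≤ m) (k l : ℕ)
    (hk1 : 1 ≤ k) (hkl : k ≤ l) (hl : l ≤ m - 1) (hsum : k + l ≤ 2 * m - 2)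
    (N : ℕ) (hN : N = min (k + l) m)
    (L₁ L₁' L₂ : SubM m) (hZ : InZkl m k l L₁ L₁' L₂)
    (s : ℕ) (hs : s ≤ N - l)
    (d : ℕ)
    (hd : d = Module.finrank ℂ
      ↥(LinearMap.ker (quotSmul m Polynomial.X (polyL0 m) L₂)))
    (hds : l + s ≤ d)
    (hint : k - s ≤ fdim m (polyL0 m) (L₁ ⊓ L₁'))
    (ho : d + fdim m (polyL0 m) (L₁ ⊓ L₁') ≤ k + l + 1)
    (W₁ W₂ : SubM m)
    (hW11 : polyL0 m ≤ W₁) (hW12 : W₁ ≤ L₁ ⊓ L₁')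
    (hW21 : L₁ ⊔ L₁' ≤ W₂) (hW22 : W₂ ≤ L₂)
    (hW1d : fdim m (polyL0 m) W₁ = k - s) (hW2d : fdim m (polyL0 m) W₂ = l + s)
    (hzW1 : ∀ x ∈ L₂, zmul0 m x ∈ W₁) (hzW2 : ∀ x ∈ W₂, zmul0 m x ∈ polyL0 m) :
    -- (a) the induced map z̄ : L₂/W₂ → W₁/L₀ exists ...
    ((∃ zbar : QuotMod m W₂ L₂ →ₗ[ℂ] QuotMod m (polyL0 m) W₁,
        ∀ (x : ↥L₂) (y : ↥W₁), (y : KM m) = (Polynomial.X : Polynomial ℂ) • (x : KM m) →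
          zbar (Submodule.Quotient.mk x) = Submodule.Quotient.mk y) ∧
      -- ... and for any such map, dim ker(z|_{L₂/L₀}) = (l+s) + dim ker z̄, and
      -- dim ker(z|_{L₂/L₀}) ≥ l+s+1 iff z̄ is not injective
      (∀ zbar : QuotMod m W₂ L₂ →ₗ[ℂ] QuotMod m (polyL0 m) W₁,
        (∀ (x : ↥L₂) (y : ↥W₁), (y : KM m) = (Polynomial.X : Polynomial ℂ) • (x : KM m) →
          zbar (Submodule.Quotient.mk x) = Submodule.Quotient.mk y) →
        (d = (l + s) + Module.finrank ℂ ↥(LinearMap.ker zbar) ∧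
          (l + s + 1 ≤ d ↔ ¬ Function.Injective zbar)))) ∧
    -- (b) the induced map ι : L₁/W₁ → W₂/L'₁ exists ...
    ((∃ ι : QuotMod m W₁ L₁ →ₗ[ℂ] QuotMod m L₁' W₂,
        ∀ (x : ↥L₁) (y : ↥W₂), (y : KM m) = (x : KM m) →
          ι (Submodule.Quotient.mk x) = Submodule.Quotient.mk y) ∧
      -- ... and any such map has kernel (L₁ ∩ L'₁)/W₁,
      -- dim((L₁ ∩ L'₁)/L₀) = (k-s) + dim ker ι, and
      -- dim((L₁ ∩ L'₁)/L₀) ≥ k-s+1 iff ι is not injective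
      (∀ ι : QuotMod m W₁ L₁ →ₗ[ℂ] QuotMod m L₁' W₂,
        (∀ (x : ↥L₁) (y : ↥W₂), (y : KM m) = (x : KM m) →
          ι (Submodule.Quotient.mk x) = Submodule.Quotient.mk y) →
        (LinearMap.ker ι =
            Submodule.restrictScalars ℂ
              (Submodule.map (Submodule.mkQ (W₁.comap L₁.subtype))
                ((L₁ ⊓ L₁').comap L₁.subtype)) ∧
          fdim m (polyL0 m) (L₁ ⊓ L₁') = (k - s) + Module.finrank ℂ ↥(LinearMap.ker ι) ∧
          (k - s + 1 ≤ fdim m (polyL0 m) (L₁ ⊓ L₁') ↔ ¬ Function.Injective ι)))) := by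
  have := hZ.finiteDimensional_quotMod (by omega)
  rw [hd, ← hW1d, ← hW2d]
  exact statement12_general (zmul0 m) hW11 hW12 (le_sup_left.trans hW21) hW22 hzW1 hzW2
    (isInduced_quotSmul_X m _ _)
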